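/- (Theorem 1, third-order part, second alternative.) Assume the IMEX Runge–Kutta coefficients satisfy the third-order conditions of additive Runge–Kutta methods: Σ_{i} ω̃_i = Σ_{i} ω_i = 1; with c̃_i := Σ_{j} ã_{ij} and c_i := Σ_{j} a_{ij}, Σ_{i} w_i d_i = 1/2 for every choice w ∈ {ω̃, ω}, d ∈ {c̃, c}; Σ_{i} w_i d_i e_i = 1/3 for every choice w ∈ {ω̃, ω}, d, e ∈ {c̃, c}; and Σ_{i,j} w_i m_{ij} d_j = 1/6 for every choice w ∈ {ω̃, ω}, m ∈ {ã, a}, d ∈ {c̃, c}. Assume in addition, with γ̃_i := Σ_{j} α̃_{ij} and γ_i := Σ_{j} α_{ij}, that Σ_{i,j} ω_i a_{ij} γ_i = 1/6 and Σ_{i,j} ω_i ã_{ij} γ̃_i = 1/6, and that either Σ_{i,j} ω_i a_{ij} γ̃_i = 1/6 or Σ_{i,j} ω_i ã_{ij} γ_i = 1/6. Then the combined forward–adjoint scheme is of third order: for every exact solution (y, p̃, p) of the coupled system with p̃(0) = p(0) there exist constants C > 0 and h₀ > 0 such that for every 0 < h ≤ h₀, any one step of the combined scheme started at (y(0), p̃(0),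 p(0)) with p̃_n = p_n, whose stage values Y^(i), P̃^(i), P^(i) satisfy the stage equations and lie within distance 1 of y(0) and p(0) respectively, satisfies ‖y_{n+1} − y(h)‖ + ‖p̃_{n+1} − p̃(h)‖ + ‖p_{n+1} − p(h)‖ ≤ C h⁴. -/

import Mathlib

open Finset Matrix

/-- The Jacobian matrix of a map `g : ℝ^d → ℝ^d` at `x`:
entry `(i, j)` is `∂ g_i / ∂ x_j (x)`. -/
noncomputable def jacMat {d : ℕ} (g : (Fin d → ℝ) → (Fin d → ℝ))
    (x : Fin d → ℝ) : Matrix (Fin d) (Fin d) ℝ :=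
  fun i j => fderiv ℝ g x (Pi.single j 1) i

/-!
If the forward equation does not depend on `p` and the adjoint equation is linear in `p`, the
combined scheme is a single Runge–Kutta method applied to `z = (y, p)`, in which every stage of
every forward and adjoint component is a stage of its own. Its third-order conditions need only
be checked on those elementary differentials of the coupled field that do not vanish: two adjoint
stages never meet under a second derivative, and no forward component has an adjoint stage below
it. All the remaining conditions follow from the additive third-order conditions of the
underlying IMEX method, because the adjoint tableau `α i j = w j - (w j / b i) * a j i` satisfies
`∑ i, b i * u i * ∑ j, α i j * v j = (∑ i, b i * u i) * (∑ j, w j * v j) -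
∑ j, w j * (∑ i, a j i * u i) * v j`.
-/

open Filter Asymptotics Topology

variable {E F : Type*} [NormedAddCommGroup E] [NormedAddCommGroup F]

theorem exists_forall_norm_le_of_isBigO {X : Type*} {h : X → ℝ} {S : Set X} {e : X → E} {n : ℕ}
    (he : e =O[comap h (𝓝[>] 0) ⊓ 𝓟 S] fun x => h x ^ n) :
    ∃ C > (0 : ℝ), ∃ h₀ > (0 : ℝ), ∀ x ∈ S, 0 < h x → h x ≤ h₀ → ‖e x‖ ≤ C * h x ^ n := by
  obtain ⟨C, hC, hbound⟩ := he.exists_pos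
  obtain ⟨V, hV, hVS⟩ := mem_comap.1 (eventually_inf_principal.1 hbound.bound)
  obtain ⟨h₀, hh₀, hIoc⟩ := mem_nhdsGT_iff_exists_Ioc_subset.1 hV
  refine ⟨C, hC, h₀, hh₀, fun x hxS hpos hle => ?_⟩
  simpa [abs_of_pos hpos] using hVS (show h x ∈ V from hIoc ⟨hpos, hle⟩) hxS

theorem isBigO_one_comp_of_mem_closedBall [ProperSpace E] {X : Type*} {l : Filter X}
    {u : E → F} (hu : Continuous u) {Z : X → E} {z : E} {R : ℝ}
    (hZ : ∀ᶠ x in l, Z x ∈ Metric.closedBall z R) : (fun x => u (Z x)) =O[l] fun _ => (1 : ℝ) := by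
  obtain ⟨C, hC⟩ := (isCompact_closedBall z R).exists_bound_of_continuousOn hu.continuousOn
  exact IsBigO.of_bound C (hZ.mono fun x hx => by simpa using hC _ hx)

variable [NormedSpace ℝ E] [NormedSpace ℝ F]

theorem isBigO_sub_of_hasFDerivAt_isBigO {R : E → F} {R' : E → E →L[ℝ] F} {a : E} {n : ℕ}
    (hR : ∀ᶠ x in 𝓝 a, HasFDerivAt R (R' x) x) (hR' : R' =O[𝓝 a] fun x => ‖x - a‖ ^ n) :
    (fun x => R x - R a) =O[𝓝 a] fun x => ‖x - a‖ ^ (n + 1) := by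
  obtain ⟨C, hC, hbound⟩ := hR'.exists_nonneg
  obtain ⟨δ, hδ, hball⟩ := Metric.eventually_nhds_iff_ball.1 (hR.and hbound.bound)
  refine IsBigO.of_bound C ?_
  filter_upwards [Metric.ball_mem_nhds a hδ] with v hv
  have closedBall_subset : Metric.closedBall a ‖v - a‖ ⊆ Metric.ball a δ :=
    Metric.closedBall_subset_ball (by simpa [dist_eq_norm] using hv)
  have deriv_le : ∀ x ∈ Metric.closedBall a ‖v - a‖, ‖R' x‖ ≤ C * ‖v - a‖ ^ n := fun x hx =>
    calc ‖R' x‖ ≤ C * ‖x - a‖ ^ n := by simpa using (hball x (closedBall_subset hx)).2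
      _ ≤ C * ‖v - a‖ ^ n := by gcongr; simpa [dist_eq_norm] using hx
  calc ‖R v - R a‖ ≤ C * ‖v - a‖ ^ n * ‖v - a‖ :=
        (convex_closedBall a ‖v - a‖).norm_image_sub_le_of_norm_hasFDerivWithin_le
          (fun x hx => (hball x (closedBall_subset hx)).1.hasFDerivWithinAt) deriv_le
          (by simp) (by simp [dist_eq_norm])
    _ = C * ‖‖v - a‖ ^ (n + 1)‖ := by rw [norm_pow, norm_norm]; ring

theorem isBigO_sub_of_hasDerivAt_isBigO {u u' : ℝ → F} {n : ℕ}
    (hu : ∀ᶠ t in 𝓝 0, HasDerivAt u (u' t) t) (hu' : u' =O[𝓝 0] fun t : ℝ => t ^ n) :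
    (fun t => u t - u 0) =O[𝓝 0] fun t : ℝ => t ^ (n + 1) := by
  have norm_deriv : (fun t => ContinuousLinearMap.toSpanSingleton ℝ (u' t)) =O[𝓝 0]
      fun t : ℝ => ‖t - 0‖ ^ n := by
    simpa only [sub_zero, ← norm_pow, isBigO_norm_right] using
      IsBigO.of_norm_left (by simpa using hu'.norm_left)
  simpa only [sub_zero, ← norm_pow, isBigO_norm_right] using
    isBigO_sub_of_hasFDerivAt_isBigO (hu.mono fun _ ht => ht.hasFDerivAt) norm_deriv

theorem isBigO_taylor_one {f : E → F} {z : E} (hf : ContDiffAt ℝ 2 f z) :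
    (fun x => f x - f z - fderiv ℝ f z (x - z)) =O[𝓝 z] fun x => ‖x - z‖ ^ 2 := by
  have hasFDerivAt_remainder : ∀ᶠ x in 𝓝 z, HasFDerivAt
      (fun x => f x - f z - fderiv ℝ f z (x - z)) (fderiv ℝ f x - fderiv ℝ f z) x := by
    filter_upwards [hf.eventually (by simp)] with x hx
    simpa using ((hx.differentiableAt (by simp)).hasFDerivAt.sub_const (f z)).fun_sub
      ((fderiv ℝ f z).hasFDerivAt.comp x ((hasFDerivAt_id x).sub_const z))
  have hf' : DifferentiableAt ℝ (fderiv ℝ f) z :=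
    (hf.fderiv_right (m := 1) (by norm_num)).differentiableAt (by simp)
  simpa using isBigO_sub_of_hasFDerivAt_isBigO (n := 1) hasFDerivAt_remainder
    (by simpa using hf'.isBigO_sub.norm_right)

theorem isBigO_taylor_two {f : E → F} {z : E} (hf : ContDiffAt ℝ 3 f z) :
    (fun x => f x - f z - fderiv ℝ f z (x - z)
      - (1 / 2 : ℝ) • fderiv ℝ (fderiv ℝ f) z (x - z) (x - z)) =O[𝓝 z] fun x => ‖x - z‖ ^ 3 := by
  set Q := fderiv ℝ (fderiv ℝ f) z
  have symm_Q : ∀ u v, Q u v = Q v u :=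
    (hf.isSymmSndFDerivAt (by simp only [minSmoothness_of_isRCLikeNormedField]; norm_num)).eq
  have hasFDerivAt_quadratic : ∀ x, HasFDerivAt
      (fun x => (1 / 2 : ℝ) • Q (x - z) (x - z)) (Q (x - z)) x := fun x => by
    have hsub : HasFDerivAt (fun x : E => x - z) (ContinuousLinearMap.id ℝ E) x :=
      (hasFDerivAt_id x).sub_const z
    refine (((Q.hasFDerivAt.comp x hsub).clm_apply hsub).const_smul (1 / 2 : ℝ)).congr_fderiv ?_
    ext w
    simp only [Function.comp_apply, ContinuousLinearMap.comp_id, _root_.smul_apply,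
      _root_.add_apply, ContinuousLinearMap.flip_apply, symm_Q w]
    module
  have hasFDerivAt_remainder : ∀ᶠ x in 𝓝 z, HasFDerivAt
      (fun x => f x - f z - fderiv ℝ f z (x - z) - (1 / 2 : ℝ) • Q (x - z) (x - z))
      (fderiv ℝ f x - fderiv ℝ f z - Q (x - z)) x := by
    filter_upwards [hf.eventually (by simp)] with x hx
    simpa using (((hx.differentiableAt (by simp)).hasFDerivAt.sub_const (f z)).fun_sub
      ((fderiv ℝ f z).hasFDerivAt.comp x ((hasFDerivAt_id x).sub_const z))).fun_sub
      (hasFDerivAt_quadratic x)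
  simpa using isBigO_sub_of_hasFDerivAt_isBigO hasFDerivAt_remainder
    (isBigO_taylor_one (hf.fderiv_right (m := 2) (by norm_num)))

section Composition

variable {X : Type*} {l : Filter X} {h : X → ℝ}

theorem isBigO_of_sub_pow_smul_isBigO (hh : Tendsto h l (𝓝 0)) {v : X → E} {c : E} {n : ℕ}
    (hv : (fun x => v x - h x ^ n • c) =O[l] fun x => h x ^ (n + 1)) :
    v =O[l] fun x => h x ^ n := by
  have pow_succ_isBigO : (fun x => h x ^ (n + 1)) =O[l] fun x => h x ^ n := by
    simpa [pow_succ] using (isBigO_refl (fun x => h x ^ n) l).mul (hh.isBigO_one ℝ)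
  have smul_isBigO : (fun x => h x ^ n • c) =O[l] fun x => h x ^ n := by
    simpa using
      (isBigO_refl (fun x => h x ^ n) l).smul (isBigO_const_const c (one_ne_zero (α := ℝ)) l)
  simpa using (hv.trans pow_succ_isBigO).add smul_isBigO

theorem isBigO_apply_apply {Q : E →L[ℝ] E →L[ℝ] F} {u v : X → E} {m n : ℕ}
    (hu : u =O[l] fun x => h x ^ m) (hv : v =O[l] fun x => h x ^ n) :
    (fun x => Q (u x) (v x)) =O[l] fun x => h x ^ (m + n) := by
  simpa only [pow_add] using
    Q.isBoundedBilinearMap.isBigO_comp.trans (hu.norm_left.mul hv.norm_left)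

theorem isBigO_comp_sub (hh : Tendsto h l (𝓝 0)) {f : E → F} {Z : X → E} {z : E}
    (hf : DifferentiableAt ℝ f z) (hZ : (fun x => Z x - z) =O[l] h) :
    (fun x => f (Z x) - f z) =O[l] h :=
  (hf.isBigO_sub.comp_tendsto (tendsto_sub_nhds_zero_iff.1 (hZ.trans_tendsto hh))).trans hZ

theorem isBigO_comp_sub_one (hh : Tendsto h l (𝓝 0)) {f : E → F} {Z : X → E} {z U : E}
    (hf : ContDiffAt ℝ 2 f z)
    (hZ : (fun x => Z x - z - h x • U) =O[l] fun x => h x ^ 2) :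
    (fun x => f (Z x) - f z - h x • fderiv ℝ f z U) =O[l] fun x => h x ^ 2 := by
  have hZ₀ : (fun x => Z x - z) =O[l] h := by
    simpa using isBigO_of_sub_pow_smul_isBigO (n := 1) hh (by simpa using hZ)
  have remainder := ((isBigO_taylor_one hf).comp_tendsto
    (tendsto_sub_nhds_zero_iff.1 (hZ₀.trans_tendsto hh))).trans (hZ₀.norm_left.pow 2)
  refine (remainder.add (((fderiv ℝ f z).isBigO_comp _ l).trans hZ)).congr_left fun x => ?_
  simp only [Function.comp_apply, map_sub, map_smul]
  abel

theorem isBigO_comp_sub_two (hh : Tendsto h l (𝓝 0)) {f : E → F} {Z : X → E} {z U T : E}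
    (hf : ContDiffAt ℝ 3 f z)
    (hZ : (fun x => Z x - z - h x • U - h x ^ 2 • T) =O[l] fun x => h x ^ 3) :
    (fun x => f (Z x) - f z - h x • fderiv ℝ f z U - h x ^ 2 • (fderiv ℝ f z T
      + (1 / 2 : ℝ) • fderiv ℝ (fderiv ℝ f) z U U)) =O[l] fun x => h x ^ 3 := by
  set Q := fderiv ℝ (fderiv ℝ f) z
  have hZ₁ : (fun x => Z x - z - h x • U) =O[l] fun x => h x ^ 2 :=
    isBigO_of_sub_pow_smul_isBigO hh hZ
  have hZ₀ : (fun x => Z x - z) =O[l] h := by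
    simpa using isBigO_of_sub_pow_smul_isBigO (n := 1) hh (by simpa using hZ₁)
  have hU : (fun x => h x • U) =O[l] h := by
    simpa using (isBigO_refl h l).smul (isBigO_const_const U (one_ne_zero (α := ℝ)) l)
  have remainder := ((isBigO_taylor_two hf).comp_tendsto
    (tendsto_sub_nhds_zero_iff.1 (hZ₀.trans_tendsto hh))).trans (hZ₀.norm_left.pow 3)
  have quadratic : (fun x => Q (Z x - z) (Z x - z) - Q (h x • U) (h x • U))
      =O[l] fun x => h x ^ 3 := by
    have left : (fun x => Q (Z x - z - h x • U) (Z x - z)) =O[l] fun x => h x ^ (2 + 1) :=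
      isBigO_apply_apply hZ₁ (by simpa using hZ₀)
    have right : (fun x => Q (h x • U) (Z x - z - h x • U)) =O[l] fun x => h x ^ (1 + 2) :=
      isBigO_apply_apply (by simpa using hU) hZ₁
    refine (left.add right).congr_left fun x => ?_
    simp only [map_sub, _root_.sub_apply]
    abel
  refine ((remainder.add (((fderiv ℝ f z).isBigO_comp _ l).trans hZ)).add
    (quadratic.const_smul_left (1 / 2 : ℝ))).congr_left fun x => ?_
  simp only [Function.comp_apply, Pi.smul_apply, map_sub, map_smul, _root_.sub_apply,
    _root_.smul_apply]
  module

end Composition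

theorem hasDerivAt_pow_div_smul (n : ℕ) (c : E) (t : ℝ) :
    HasDerivAt (fun t : ℝ => (t ^ (n + 1) / (n + 1)) • c) (t ^ n • c) t := by
  refine (((hasDerivAt_pow (n + 1) t).div_const (n + 1 : ℝ)).smul_const c).congr_deriv ?_
  congr 1
  push_cast
  field_simp

theorem isBigO_ode_taylor_two {f : E → E} {z : ℝ → E} (hf : ContDiffAt ℝ 2 f (z 0))
    (hz : ∀ᶠ t in 𝓝 0, HasDerivAt z (f (z t)) t) :
    (fun t => z t - z 0 - t • f (z 0) - t ^ 2 • (1 / 2 : ℝ) • fderiv ℝ f (z 0) (f (z 0)))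
      =O[𝓝 0] fun t : ℝ => t ^ 3 := by
  set e := f (z 0)
  set L := fderiv ℝ f (z 0)
  have zeroth : (fun t => z t - z 0) =O[𝓝 0] fun t : ℝ => t := by
    simpa using hz.self_of_nhds.isBigO_sub
  have f_zeroth : (fun t => f (z t) - e) =O[𝓝 0] fun t : ℝ => t :=
    isBigO_comp_sub tendsto_id (hf.differentiableAt (by simp)) zeroth
  have hasDerivAt_first : ∀ᶠ t in 𝓝 0, HasDerivAt (fun t => z t - t • e) (f (z t) - e) t := by
    filter_upwards [hz] with t ht
    simpa using ht.fun_sub (hasDerivAt_pow_div_smul 0 e t)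
  have first : (fun t => z t - z 0 - t • e) =O[𝓝 0] fun t : ℝ => t ^ 2 :=
    (isBigO_sub_of_hasDerivAt_isBigO hasDerivAt_first (by simpa using f_zeroth)).congr_left
      fun t => by module
  have f_first : (fun t => f (z t) - e - t • L e) =O[𝓝 0] fun t : ℝ => t ^ 2 :=
    isBigO_comp_sub_one tendsto_id hf first
  have hasDerivAt_second : ∀ᶠ t in 𝓝 0,
      HasDerivAt (fun t => z t - t • e - (t ^ 2 / 2) • L e) (f (z t) - e - t • L e) t := by
    filter_upwards [hasDerivAt_first] with t ht
    simpa [one_add_one_eq_two] using ht.fun_sub (hasDerivAt_pow_div_smul 1 (L e) t)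
  exact (isBigO_sub_of_hasDerivAt_isBigO hasDerivAt_second f_first).congr_left fun t => by module

theorem isBigO_ode_taylor_three {f : E → E} {z : ℝ → E} (hf : ContDiffAt ℝ 3 f (z 0))
    (hz : ∀ᶠ t in 𝓝 0, HasDerivAt z (f (z t)) t) :
    (fun t => z t - z 0 - t • f (z 0) - (t ^ 2 / 2) • fderiv ℝ f (z 0) (f (z 0))
      - (t ^ 3 / 6) • (fderiv ℝ f (z 0) (fderiv ℝ f (z 0) (f (z 0)))
          + fderiv ℝ (fderiv ℝ f) (z 0) (f (z 0)) (f (z 0)))) =O[𝓝 0] fun t : ℝ => t ^ 4 := by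
  set e := f (z 0)
  set L := fderiv ℝ f (z 0)
  set Q := fderiv ℝ (fderiv ℝ f) (z 0)
  have f_second : (fun t => f (z t) - e - t • L e
      - t ^ 2 • (L ((1 / 2 : ℝ) • L e) + (1 / 2 : ℝ) • Q e e)) =O[𝓝 0] fun t : ℝ => t ^ 3 :=
    isBigO_comp_sub_two tendsto_id hf (isBigO_ode_taylor_two (hf.of_le (by norm_num)) hz)
  have hasDerivAt_third : ∀ᶠ t in 𝓝 0, HasDerivAt
      (fun t => z t - t • e - (t ^ 2 / 2) • L e - (t ^ 3 / 3) •
        (L ((1 / 2 : ℝ) • L e) + (1 / 2 : ℝ) • Q e e))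
      (f (z t) - e - t • L e - t ^ 2 • (L ((1 / 2 : ℝ) • L e) + (1 / 2 : ℝ) • Q e e)) t := by
    filter_upwards [hz] with t ht
    simpa [one_add_one_eq_two, two_add_one_eq_three] using
      ((ht.fun_sub (hasDerivAt_pow_div_smul 0 e t)).fun_sub
        (hasDerivAt_pow_div_smul 1 (L e) t)).fun_sub
        (hasDerivAt_pow_div_smul 2 (L ((1 / 2 : ℝ) • L e) + (1 / 2 : ℝ) • Q e e) t)
  refine (isBigO_sub_of_hasDerivAt_isBigO hasDerivAt_third f_second).congr_left fun t => ?_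
  simp only [map_smul]
  module

section RungeKutta

variable {σ : Type*} [Fintype σ]

/-- The coefficient of `h` in the expansion of stage `i` of a Runge–Kutta step from `z`,
when stage `j` evaluates its own vector field `f j`. -/
def stageSlope (A : Matrix σ σ ℝ) (f : σ → E → E) (z : E) (i : σ) : E :=
  ∑ j, A i j • f j z

/-- The coefficient of `h ^ 2` in the expansion of stage `i` of a Runge–Kutta step from `z`,
when stage `j` evaluates its own vector field `f j`. -/
noncomputable def stageCurvature (A : Matrix σ σ ℝ) (f : σ → E → E) (z : E) (i : σ) : E :=
  ∑ j, A i j • fderiv ℝ (f j) z (stageSlope A f z j)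

/-- The order conditions up to order three, at the point `z`, for the approximation of
`z' = v z` by a Runge–Kutta method with tableau `A` and weights `b` whose stage `i` evaluates
the vector field `f i`. -/
structure HasThirdOrderAt (A : Matrix σ σ ℝ) (b : σ → ℝ) (f : σ → E → E) (v : E → E) (z : E) :
    Prop where
  order_one : ∑ i, b i • f i z = v z
  order_two : ∑ i, b i • fderiv ℝ (f i) z (stageSlope A f z i) =
    (1 / 2 : ℝ) • fderiv ℝ v z (v z)
  order_three_bushy :
    ∑ i, b i • fderiv ℝ (fderiv ℝ (f i)) z (stageSlope A f z i) (stageSlope A f z i) =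
      (1 / 3 : ℝ) • fderiv ℝ (fderiv ℝ v) z (v z) (v z)
  order_three_tall : ∑ i, b i • fderiv ℝ (f i) z (stageCurvature A f z i) =
    (1 / 6 : ℝ) • fderiv ℝ v z (fderiv ℝ v z (v z))

variable {X : Type*} {l : Filter X} {h : X → ℝ}

theorem isBigO_smul_sum (b : σ → ℝ) {u : X → σ → E} {n : ℕ}
    (hu : ∀ i, (fun x => u x i) =O[l] fun x => h x ^ n) :
    (fun x => h x • ∑ i, b i • u x i) =O[l] fun x => h x ^ (n + 1) := by
  simpa only [pow_succ', smul_eq_mul] using (isBigO_refl h l).smul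
    (IsBigO.fun_sum (A := fun i x => b i • u x i) fun i _ => (hu i).const_smul_left (b i))

theorem sum_smul_smul_comm (b : σ → ℝ) (c : ℝ) (u : σ → E) :
    ∑ i, b i • c • u i = c • ∑ i, b i • u i := by
  simp_rw [Finset.smul_sum, smul_comm c]

variable {A : Matrix σ σ ℝ} {f : σ → E → E} {z : E} {Z : X → σ → E}

theorem stage_sub_isBigO
    (hZ : ∀ᶠ x in l, ∀ i, Z x i = z + h x • ∑ j, A i j • f j (Z x j))
    (hfZ : ∀ j, (fun x => f j (Z x j)) =O[l] fun _ => (1 : ℝ)) (i : σ) :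
    (fun x => Z x i - z) =O[l] h := by
  have increment := isBigO_smul_sum (h := h) (n := 0) (A i) (by simpa using hfZ)
  refine (show _ =O[l] h by simpa using increment).congr' ?_ .rfl
  filter_upwards [hZ] with x hx
  rw [hx i, add_sub_cancel_left]

theorem stage_sub_slope_isBigO (hh : Tendsto h l (𝓝 0))
    (hZ : ∀ᶠ x in l, ∀ i, Z x i = z + h x • ∑ j, A i j • f j (Z x j))
    (hfZ : ∀ j, (fun x => f j (Z x j)) =O[l] fun _ => (1 : ℝ))
    (hf : ∀ j, DifferentiableAt ℝ (f j) z) (i : σ) :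
    (fun x => Z x i - z - h x • stageSlope A f z i) =O[l] fun x => h x ^ 2 := by
  refine (isBigO_smul_sum (h := h) (n := 1) (A i) fun j => by
    simpa using isBigO_comp_sub hh (hf j) (stage_sub_isBigO hZ hfZ j)).congr' ?_ .rfl
  filter_upwards [hZ] with x hx
  simp only [hx i, stageSlope, add_sub_cancel_left, smul_sub, Finset.sum_sub_distrib]

theorem stage_sub_slope_sub_curvature_isBigO (hh : Tendsto h l (𝓝 0))
    (hZ : ∀ᶠ x in l, ∀ i, Z x i = z + h x • ∑ j, A i j • f j (Z x j))
    (hfZ : ∀ j, (fun x => f j (Z x j)) =O[l] fun _ => (1 : ℝ))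
    (hf : ∀ j, ContDiffAt ℝ 2 (f j) z) (i : σ) :
    (fun x => Z x i - z - h x • stageSlope A f z i - h x ^ 2 • stageCurvature A f z i)
      =O[l] fun x => h x ^ 3 := by
  refine (isBigO_smul_sum (h := h) (A i) fun j => isBigO_comp_sub_one hh (hf j)
    (stage_sub_slope_isBigO hh hZ hfZ (fun j => (hf j).differentiableAt (by simp)) j)).congr'
    ?_ .rfl
  filter_upwards [hZ] with x hx
  simp only [hx i, stageSlope, stageCurvature, add_sub_cancel_left, smul_sub,
    Finset.sum_sub_distrib, sum_smul_smul_comm]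
  rw [smul_smul, ← sq]

theorem HasThirdOrderAt.localError_isBigO {b : σ → ℝ} {v : E → E} {z : ℝ → E}
    (horder : HasThirdOrderAt A b f v (z 0)) (hf : ∀ i, ContDiffAt ℝ 3 (f i) (z 0))
    (hv : ContDiffAt ℝ 3 v (z 0)) (hz : ∀ᶠ t in 𝓝 0, HasDerivAt z (v (z t)) t)
    (hh : Tendsto h l (𝓝 0))
    (hZ : ∀ᶠ x in l, ∀ i, Z x i = z 0 + h x • ∑ j, A i j • f j (Z x j))
    (hfZ : ∀ j, (fun x => f j (Z x j)) =O[l] fun _ => (1 : ℝ)) :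
    (fun x => z 0 + h x • ∑ i, b i • f i (Z x i) - z (h x)) =O[l] fun x => h x ^ 4 := by
  have step := isBigO_smul_sum (h := h) b fun i => isBigO_comp_sub_two hh (hf i)
    (stage_sub_slope_sub_curvature_isBigO hh hZ hfZ (fun j => (hf j).of_le (by norm_num)) i)
  have solution := (isBigO_ode_taylor_three hv hz).comp_tendsto hh
  refine (step.sub solution).congr_left fun x => ?_
  simp only [Function.comp_apply, smul_sub, smul_add, Finset.sum_sub_distrib,
    Finset.sum_add_distrib, sum_smul_smul_comm, horder.order_one, horder.order_two,
    horder.order_three_bushy, horder.order_three_tall]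
  module

end RungeKutta

section PartitionedRungeKutta

variable {K ι : Type*} [Fintype K] [Fintype ι]

theorem sum_smul_map_sum (L : E →L[ℝ] F) (w : ι → ℝ) (c : K → ι → ℝ) (e : K → E) :
    ∑ i, w i • L (∑ k, c k i • e k) = ∑ k, (w ⬝ᵥ c k) • L (e k) := by
  simp only [map_sum, map_smul, dotProduct, Finset.smul_sum, Finset.sum_smul, smul_smul]
  exact Finset.sum_comm

theorem sum_smul_map_sum_sum (Q : E →L[ℝ] E →L[ℝ] F) (w : ι → ℝ) (c : K → ι → ℝ) (e : K → E) :
    ∑ i, w i • Q (∑ k, c k i • e k) (∑ l, c l i • e l) =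
      ∑ k, ∑ l, (w ⬝ᵥ (c k * c l)) • Q (e k) (e l) := by
  calc ∑ i, w i • Q (∑ k, c k i • e k) (∑ l, c l i • e l)
      = ∑ k, ∑ i, (w * c k) i • Q (e k) (∑ l, c l i • e l) := by
        simp only [map_sum Q, map_smul Q, _root_.sum_apply, _root_.smul_apply, Finset.smul_sum,
          smul_smul, Pi.mul_apply]
        exact Finset.sum_comm
    _ = ∑ k, ∑ l, (w ⬝ᵥ (c k * c l)) • Q (e k) (e l) := by
        simp only [sum_smul_map_sum, dotProduct, Pi.mul_apply, mul_assoc]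

/-- The tableau of a partitioned Runge–Kutta method with coefficients `A k l`, as a tableau whose
stages are the pairs `(k, i)` of a part `k` of the vector field and a stage `i` of that part. -/
def partitionedTableau (A : K → K → Matrix ι ι ℝ) : Matrix (K × ι) (K × ι) ℝ :=
  fun i j => A i.1 j.1 i.2 j.2

/-- The order conditions up to order three of the partitioned Runge–Kutta method with coefficients
`A k l` and weights `b k` for `z' = ∑ k, f k z`. A condition on three nodes is imposed only where
its elementary differential does not vanish at `z`. -/
structure HasPartitionedThirdOrderAt (A : K → K → Matrix ι ι ℝ) (b : K → ι → ℝ) (f : K → E → E)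
    (z : E) : Prop where
  order_one : ∀ k, b k ⬝ᵥ 1 = 1
  order_two : ∀ k l, b k ⬝ᵥ A k l *ᵥ 1 = 1 / 2
  order_three_bushy : ∀ k l m, b k ⬝ᵥ (A k l *ᵥ 1 * A k m *ᵥ 1) = 1 / 3 ∨
    fderiv ℝ (fderiv ℝ (f k)) z (f l z) (f m z) = 0
  order_three_tall : ∀ k l m, b k ⬝ᵥ A k l *ᵥ (A l m *ᵥ 1) = 1 / 6 ∨
    fderiv ℝ (f k) z (fderiv ℝ (f l) z (f m z)) = 0

variable {A : K → K → Matrix ι ι ℝ} {b : K → ι → ℝ} {f : K → E → E} {z : E}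

theorem stageSlope_partitionedTableau (k : K) (i : ι) :
    stageSlope (partitionedTableau A) (fun j => f j.1) z (k, i) =
      ∑ l, (A k l *ᵥ 1) i • f l z := by
  simp only [stageSlope, partitionedTableau, Fintype.sum_prod_type, mulVec, dotProduct_one,
    Finset.sum_smul]

theorem stageCurvature_partitionedTableau (k : K) (i : ι) :
    stageCurvature (partitionedTableau A) (fun j => f j.1) z (k, i) =
      ∑ lm : K × K, (A k lm.1 *ᵥ (A lm.1 lm.2 *ᵥ 1)) i •
        fderiv ℝ (f lm.1) z (f lm.2 z) := by
  simp only [stageCurvature, Fintype.sum_prod_type, stageSlope_partitionedTableau]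
  exact Finset.sum_congr rfl fun l _ => sum_smul_map_sum _ (A k l i) _ _

theorem fderiv_fderiv_sum (hf : ∀ k, ContDiffAt ℝ 2 (f k) z) :
    fderiv ℝ (fderiv ℝ fun x => ∑ k, f k x) z = ∑ k, fderiv ℝ (fderiv ℝ (f k)) z := by
  have fderiv_sum : fderiv ℝ (fun x => ∑ k, f k x) =ᶠ[𝓝 z] fun x => ∑ k, fderiv ℝ (f k) x := by
    filter_upwards [eventually_all.2 fun k => (hf k).eventually (by simp)] with x hx
    exact fderiv_fun_sum fun k _ => (hx k).differentiableAt (by simp)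
  rw [fderiv_sum.fderiv_eq]
  exact fderiv_fun_sum fun k _ =>
    ((hf k).fderiv_right (m := 1) (by norm_num)).differentiableAt (by simp)

theorem HasPartitionedThirdOrderAt.hasThirdOrderAt (horder : HasPartitionedThirdOrderAt A b f z)
    (hf : ∀ k, ContDiffAt ℝ 2 (f k) z) :
    HasThirdOrderAt (partitionedTableau A) (fun i => b i.1 i.2) (fun i => f i.1)
      (fun x => ∑ k, f k x) z := by
  have fderiv_sum : fderiv ℝ (fun x => ∑ k, f k x) z = ∑ k, fderiv ℝ (f k) z :=
    fderiv_fun_sum fun k _ => (hf k).differentiableAt (by simp)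
  refine ⟨?_, ?_, ?_, ?_⟩
  · simp only [Fintype.sum_prod_type, ← Finset.sum_smul, ← dotProduct_one, horder.order_one,
      one_smul]
  · simp only [Fintype.sum_prod_type, stageSlope_partitionedTableau, sum_smul_map_sum,
      horder.order_two, fderiv_sum, _root_.sum_apply]
    simp only [map_sum, Finset.smul_sum]
  · simp only [Fintype.sum_prod_type, stageSlope_partitionedTableau, sum_smul_map_sum_sum,
      fderiv_fderiv_sum hf, _root_.sum_apply]
    simp only [map_sum, _root_.sum_apply, Finset.smul_sum]
    refine Finset.sum_congr rfl fun k _ => ?_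
    rw [Finset.sum_comm]
    refine Finset.sum_congr rfl fun m _ => Finset.sum_congr rfl fun l _ => ?_
    rcases horder.order_three_bushy k l m with h | h <;> simp only [h, smul_zero]
  · simp only [Fintype.sum_prod_type (α₁ := K) (α₂ := ι), stageCurvature_partitionedTableau,
      sum_smul_map_sum, fderiv_sum, _root_.sum_apply]
    simp only [map_sum, Finset.smul_sum, Fintype.sum_prod_type]
    refine Finset.sum_congr rfl fun k _ => Finset.sum_congr rfl fun l _ =>
      Finset.sum_congr rfl fun m _ => ?_
    rcases horder.order_three_tall k l m with h | h <;> simp only [h, smul_zero]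

end PartitionedRungeKutta

section AdjointTableau

variable {κ ι : Type*} [Fintype ι]

/-- The order conditions up to order three of an additive Runge–Kutta method with tableaux `M k`
and weights `W k`. -/
structure HasAdditiveThirdOrder (M : κ → Matrix ι ι ℝ) (W : κ → ι → ℝ) : Prop where
  order_one : ∀ k, W k ⬝ᵥ 1 = 1
  order_two : ∀ k l, W k ⬝ᵥ M l *ᵥ 1 = 1 / 2
  order_three_bushy : ∀ k l m, W k ⬝ᵥ (M l *ᵥ 1 * M m *ᵥ 1) = 1 / 3
  order_three_tall : ∀ k l m, W k ⬝ᵥ M l *ᵥ (M m *ᵥ 1) = 1 / 6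

/-- The coefficients with which part `l` of the adjoint equation enters the adjoint stages attached
to part `k` of an additive Runge–Kutta method. -/
noncomputable def adjointTableau (M : κ → Matrix ι ι ℝ) (W : κ → ι → ℝ) (k l : κ) :
    Matrix ι ι ℝ :=
  fun i j => W l j - W l j / W k i * M k j i

variable {M : κ → Matrix ι ι ℝ} {W : κ → ι → ℝ} {k : κ}

theorem dotProduct_mul_adjointTableau_mulVec (hW : ∀ i, W k i ≠ 0) (l : κ) (u v : ι → ℝ) :
    W k ⬝ᵥ (u * adjointTableau M W k l *ᵥ v) =
      (W k ⬝ᵥ u) * (W l ⬝ᵥ v) - W l ⬝ᵥ (M k *ᵥ u * v) := by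
  have term_eq (i j : ι) : W k i * (u i * (adjointTableau M W k l i j * v j)) =
      W k i * u i * (W l j * v j) - W l j * (M k j i * u i * v j) := by
    have := hW i
    simp only [adjointTableau]
    field_simp
  simp only [dotProduct, mulVec, Pi.mul_apply, Finset.mul_sum, Finset.sum_mul, term_eq,
    Finset.sum_sub_distrib]
  rw [Finset.sum_comm (s := univ) (t := univ) (f := fun i j => W l j * (M k j i * u i * v j)),
    Finset.sum_comm (s := univ) (t := univ) (f := fun j i => W k i * u i * (W l j * v j))]

theorem dotProduct_adjointTableau_mulVec (hW : ∀ i, W k i ≠ 0) (l : κ) (v : ι → ℝ) :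
    W k ⬝ᵥ adjointTableau M W k l *ᵥ v =
      (W k ⬝ᵥ 1) * (W l ⬝ᵥ v) - W l ⬝ᵥ (M k *ᵥ 1 * v) := by
  simpa only [one_mul] using dotProduct_mul_adjointTableau_mulVec hW l 1 v

namespace HasAdditiveThirdOrder

theorem dotProduct_adjointTableau_mulVec_one (hM : HasAdditiveThirdOrder M W)
    (hW : ∀ i, W k i ≠ 0) (l : κ) : W k ⬝ᵥ adjointTableau M W k l *ᵥ 1 = 1 / 2 := by
  rw [dotProduct_adjointTableau_mulVec hW, mul_one, hM.order_one, hM.order_one, hM.order_two]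
  norm_num

theorem dotProduct_mul_adjointTableau_mulVec_one (hM : HasAdditiveThirdOrder M W)
    (hW : ∀ i, W k i ≠ 0) (l m : κ) :
    W k ⬝ᵥ (M l *ᵥ 1 * adjointTableau M W k m *ᵥ 1) = 1 / 3 := by
  rw [dotProduct_mul_adjointTableau_mulVec hW, mul_one, hM.order_one, hM.order_two,
    hM.order_three_tall]
  norm_num

theorem dotProduct_adjointTableau_mulVec_mulVec_one (hM : HasAdditiveThirdOrder M W)
    (hW : ∀ i, W k i ≠ 0) (l m : κ) :
    W k ⬝ᵥ adjointTableau M W k l *ᵥ (M m *ᵥ 1) = 1 / 6 := by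
  rw [dotProduct_adjointTableau_mulVec hW, hM.order_one, hM.order_two, hM.order_three_bushy]
  norm_num

theorem dotProduct_adjointTableau_mulVec_adjointTableau_mulVec_one
    (hM : HasAdditiveThirdOrder M W) {l : κ} (hk : ∀ i, W k i ≠ 0) (hl : ∀ i, W l i ≠ 0) (m : κ) :
    W k ⬝ᵥ adjointTableau M W k l *ᵥ (adjointTableau M W l m *ᵥ 1) = 1 / 6 := by
  rw [dotProduct_adjointTableau_mulVec hk, hM.order_one,
    hM.dotProduct_adjointTableau_mulVec_one hl, hM.dotProduct_mul_adjointTableau_mulVec_one hl]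
  norm_num

end HasAdditiveThirdOrder

end AdjointTableau

section CoupledSystem

variable {G : Type*} [NormedAddCommGroup G] [NormedSpace ℝ G]

theorem fderiv_comp_fst_apply_zero_prod (u : E → G) (z : E × F) (q : F) :
    fderiv ℝ (fun x : E × F => u x.1) z (0, q) = 0 := by
  by_cases hu : DifferentiableAt ℝ (fun x : E × F => u x.1) z
  · rw [← hu.lineDeriv_eq_fderiv]
    simp [lineDeriv]
  · rw [fderiv_zero_of_not_differentiableAt hu, _root_.zero_apply]

theorem fderiv_fderiv_apply_zero_prod {f : E × F → G} {z : E × F}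
    (hf : DifferentiableAt ℝ (fderiv ℝ f) z) {q₂ : F} {u : E → G}
    (hu : ∀ x, fderiv ℝ f x (0, q₂) = u x.1) (q₁ : F) :
    fderiv ℝ (fderiv ℝ f) z (0, q₁) (0, q₂) = 0 := by
  have fderiv_apply := (hf.hasFDerivAt.clm_apply (hasFDerivAt_const ((0 : E), q₂) z)).fderiv
  simpa [funext hu, fderiv_comp_fst_apply_zero_prod, eq_comm] using
    congrArg (fun L : E × F →L[ℝ] G => L (0, q₁)) fderiv_apply

variable {κ : Type*}

/-- The vector field of the state `y` with parts `f k` and of its adjoint `p` with linear parts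
`B k y`, on pairs `(y, p)`: the parts `Sum.inl k` move `y` and the parts `Sum.inr k` move `p`. -/
def coupledField (f : κ → E → E) (B : κ → E → F →L[ℝ] F) : κ ⊕ κ → E × F → E × F :=
  Sum.elim (fun k z => (f k z.1, 0)) (fun k z => (0, -B k z.1 z.2))

variable {f : κ → E → E} {B : κ → E → F →L[ℝ] F} {n : WithTop ℕ∞}

theorem contDiff_coupledField (hf : ∀ k, ContDiff ℝ n (f k)) (hB : ∀ k, ContDiff ℝ n (B k))
    (k : κ ⊕ κ) : ContDiff ℝ n (coupledField f B k) := by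
  rcases k with k | k
  · exact ((hf k).comp contDiff_fst).prodMk contDiff_const
  · exact contDiff_const.prodMk (((hB k).comp contDiff_fst).clm_apply contDiff_snd).neg

theorem fderiv_coupledField_inl_apply_inr (k l : κ) (x z : E × F) :
    fderiv ℝ (coupledField f B (.inl k)) x (coupledField f B (.inr l) z) = 0 :=
  fderiv_comp_fst_apply_zero_prod (fun y => (f k y, (0 : F))) x _

theorem fderiv_coupledField_inr_apply_zero_prod {k : κ} (hB : Differentiable ℝ (B k))
    (x : E × F) (q : F) : fderiv ℝ (coupledField f B (.inr k)) x (0, q) = (0, -B k x.1 q) := by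
  have hasFDerivAt_adjoint := (hasFDerivAt_const (0 : E) x).prodMk
    (((hB x.1).hasFDerivAt.comp x hasFDerivAt_fst).clm_apply hasFDerivAt_snd).neg
  rw [show fderiv ℝ (coupledField f B (.inr k)) x = _ from hasFDerivAt_adjoint.fderiv]
  simp

theorem fderiv_fderiv_coupledField_apply_inr_inr (hf : ∀ k, ContDiff ℝ 2 (f k))
    (hB : ∀ k, ContDiff ℝ 2 (B k)) (k : κ ⊕ κ) (l m : κ) (z : E × F) :
    fderiv ℝ (fderiv ℝ (coupledField f B k)) z (coupledField f B (.inr l) z)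
      (coupledField f B (.inr m) z) = 0 := by
  have hk := ((contDiff_coupledField hf hB k).fderiv_right (m := 1)
    (by norm_num)).differentiable (by simp) z
  rcases k with k | k
  · exact fderiv_fderiv_apply_zero_prod hk (u := 0)
      (fun x => fderiv_coupledField_inl_apply_inr k m x z) _
  · exact fderiv_fderiv_apply_zero_prod hk (u := fun y => (0, -B k y (-B m z.1 z.2)))
      (fun x => fderiv_coupledField_inr_apply_zero_prod ((hB k).differentiable (by simp)) x _) _

variable {ι : Type*} [Fintype ι] {M : κ → Matrix ι ι ℝ} {W : κ → ι → ℝ}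

/-- The coefficients of the combined forward–adjoint scheme as a partitioned Runge–Kutta method for
`coupledField`. The stage `i` of both `Sum.inl k` and `Sum.inr k` is the `i`-th forward stage paired
with the `i`-th adjoint stage attached to `k`. -/
noncomputable def combinedTableau (M : κ → Matrix ι ι ℝ) (W : κ → ι → ℝ) (k : κ ⊕ κ) :
    κ ⊕ κ → Matrix ι ι ℝ :=
  Sum.elim M (adjointTableau M W (k.elim id id))

theorem HasAdditiveThirdOrder.hasPartitionedThirdOrderAt (hM : HasAdditiveThirdOrder M W)
    (hW : ∀ k i, W k i ≠ 0) (hf : ∀ k, ContDiff ℝ 2 (f k)) (hB : ∀ k, ContDiff ℝ 2 (B k))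
    (z : E × F) :
    HasPartitionedThirdOrderAt (combinedTableau M W) (fun k => W (k.elim id id))
      (coupledField f B) z where
  order_one k := hM.order_one _
  order_two k
    | .inl l => hM.order_two _ l
    | .inr l => hM.dotProduct_adjointTableau_mulVec_one (hW _) l
  order_three_bushy k
    | .inl l, .inl m => .inl (hM.order_three_bushy _ l m)
    | .inl l, .inr m => .inl (hM.dotProduct_mul_adjointTableau_mulVec_one (hW _) l m)
    | .inr l, .inl m => .inl <| by
      rw [mul_comm]
      exact hM.dotProduct_mul_adjointTableau_mulVec_one (hW _) m l
    | .inr l, .inr m => .inr (fderiv_fderiv_coupledField_apply_inr_inr hf hB k l m z)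
  order_three_tall k
    | .inl l, .inl m => .inl (hM.order_three_tall _ l m)
    | .inl l, .inr m => .inr (by rw [fderiv_coupledField_inl_apply_inr, map_zero])
    | .inr l, .inl m => .inl (hM.dotProduct_adjointTableau_mulVec_mulVec_one (hW _) l m)
    | .inr l, .inr m => .inl
      (hM.dotProduct_adjointTableau_mulVec_adjointTableau_mulVec_one (hW _) (hW _) m)

variable [Fintype κ]

/-- The stage equations of one step of length `h`, started at `(y₀, p₀)`, of the combined
forward–adjoint scheme with forward stages `Y i` and adjoint stages `P k i` attached to part `k`. -/
structure IsCombinedStage (M : κ → Matrix ι ι ℝ) (W : κ → ι → ℝ) (f : κ → E → E)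
    (B : κ → E → F →L[ℝ] F) (y₀ : E) (p₀ : F) (h : ℝ) (Y : ι → E) (P : κ → ι → F) : Prop where
  forward : ∀ i, Y i = y₀ + h • ∑ l, ∑ j, M l i j • f l (Y j)
  adjoint : ∀ k i, P k i = p₀ - h • ∑ l, ∑ j, adjointTableau M W k l i j • B l (Y j) (P l j)

theorem sum_smul_coupledField (c : κ ⊕ κ → ι → ℝ) (Y : ι → E) (P : κ → ι → F) :
    ∑ i : (κ ⊕ κ) × ι, c i.1 i.2 • coupledField f B i.1 (Y i.2, P (i.1.elim id id) i.2) =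
      (∑ k, ∑ i, c (.inl k) i • f k (Y i), -∑ k, ∑ i, c (.inr k) i • B k (Y i) (P k i)) := by
  simp [coupledField, Fintype.sum_prod_type, Prod.ext_iff, Prod.fst_sum, Prod.snd_sum]

theorem IsCombinedStage.eq_add_smul_sum {y₀ : E} {p₀ : F} {h : ℝ} {Y : ι → E} {P : κ → ι → F}
    (hYP : IsCombinedStage M W f B y₀ p₀ h Y P) (i : (κ ⊕ κ) × ι) :
    (Y i.2, P (i.1.elim id id) i.2) = (y₀, p₀) + h • ∑ j,
      partitionedTableau (combinedTableau M W) i j •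
        coupledField f B j.1 (Y j.2, P (j.1.elim id id) j.2) := by
  refine Eq.trans ?_ (congrArg (fun v => (y₀, p₀) + h • v)
    (sum_smul_coupledField (fun l j => combinedTableau M W i.1 l i.2 j) Y P).symm)
  simp only [Prod.ext_iff, Prod.smul_mk, Prod.mk_add_mk, smul_neg, ← sub_eq_add_neg]
  exact ⟨hYP.forward i.2, hYP.adjoint _ i.2⟩

theorem HasAdditiveThirdOrder.combined_localError_isBigO [ProperSpace E] [ProperSpace F]
    (hM : HasAdditiveThirdOrder M W) (hW : ∀ k i, W k i ≠ 0) (hf : ∀ k, ContDiff ℝ 3 (f k))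
    (hB : ∀ k, ContDiff ℝ 3 (B k)) {y : ℝ → E} {p : ℝ → F}
    (hy : ∀ᶠ t in 𝓝 0, HasDerivAt y (∑ k, f k (y t)) t)
    (hp : ∀ᶠ t in 𝓝 0, HasDerivAt p (-∑ k, B k (y t) (p t)) t)
    {X : Type*} {l : Filter X} {h : X → ℝ} (hh : Tendsto h l (𝓝 0)) {Y : X → ι → E}
    {P : X → κ → ι → F} (hYP : ∀ᶠ x in l, IsCombinedStage M W f B (y 0) (p 0) (h x) (Y x) (P x))
    {R : ℝ} (hY : ∀ᶠ x in l, ∀ i, ‖Y x i - y 0‖ ≤ R)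
    (hP : ∀ᶠ x in l, ∀ k i, ‖P x k i - p 0‖ ≤ R) :
    (fun x => (y 0 + h x • ∑ k, ∑ i, W k i • f k (Y x i) - y (h x),
      p 0 - h x • ∑ k, ∑ i, W k i • B k (Y x i) (P x k i) - p (h x))) =O[l] fun x => h x ^ 4 := by
  have hz : ∀ᶠ t in 𝓝 0, HasDerivAt (fun t => (y t, p t))
      (∑ k, coupledField f B k (y t, p t)) t := by
    filter_upwards [hy, hp] with t hyt hpt
    refine (hyt.prodMk hpt).congr_deriv ?_
    simp [coupledField, Prod.ext_iff, Prod.fst_sum, Prod.snd_sum]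
  have contDiff_field := contDiff_coupledField hf hB
  have horder := (hM.hasPartitionedThirdOrderAt hW (fun k => (hf k).of_le (by norm_num))
    (fun k => (hB k).of_le (by norm_num)) (y 0, p 0)).hasThirdOrderAt
      fun k => ((contDiff_field k).of_le (by norm_num)).contDiffAt
  have field_isBigO (i : (κ ⊕ κ) × ι) :
      (fun x => coupledField f B i.1 (Y x i.2, P x (i.1.elim id id) i.2)) =O[l]
        fun _ => (1 : ℝ) := by
    refine isBigO_one_comp_of_mem_closedBall (z := (y 0, p 0)) (R := R)
      (contDiff_field i.1).continuous ?_
    filter_upwards [hY, hP] with x hYx hPx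
    simpa [Prod.dist_eq, dist_eq_norm] using ⟨hYx i.2, hPx _ i.2⟩
  have localError := horder.localError_isBigO
    (Z := fun x (i : (κ ⊕ κ) × ι) => (Y x i.2, P x (i.1.elim id id) i.2))
    (fun i : (κ ⊕ κ) × ι => (contDiff_field i.1).contDiffAt)
    (ContDiff.sum fun k _ => contDiff_field k).contDiffAt hz hh
    (hYP.mono fun x hx => hx.eq_add_smul_sum) field_isBigO
  refine localError.congr_left fun x => ?_
  simp [sum_smul_coupledField (fun k => W (k.elim id id)), ← sub_eq_add_neg]

theorem HasAdditiveThirdOrder.exists_combined_localError_le [ProperSpace E] [ProperSpace F]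
    (hM : HasAdditiveThirdOrder M W) (hW : ∀ k i, W k i ≠ 0) (hf : ∀ k, ContDiff ℝ 3 (f k))
    (hB : ∀ k, ContDiff ℝ 3 (B k)) {y : ℝ → E} {p : ℝ → F}
    (hy : ∀ᶠ t in 𝓝 0, HasDerivAt y (∑ k, f k (y t)) t)
    (hp : ∀ᶠ t in 𝓝 0, HasDerivAt p (-∑ k, B k (y t) (p t)) t) (R : ℝ) :
    ∃ C > (0 : ℝ), ∃ h₀ > (0 : ℝ), ∀ h : ℝ, 0 < h → h ≤ h₀ → ∀ (Y : ι → E) (P : κ → ι → F),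
      IsCombinedStage M W f B (y 0) (p 0) h Y P →
      (∀ i, ‖Y i - y 0‖ ≤ R) → (∀ k i, ‖P k i - p 0‖ ≤ R) →
      ‖y 0 + h • ∑ k, ∑ i, W k i • f k (Y i) - y h‖ ≤ C * h ^ 4 ∧
        ‖p 0 - h • ∑ k, ∑ i, W k i • B k (Y i) (P k i) - p h‖ ≤ C * h ^ 4 := by
  let S : Set (ℝ × (ι → E) × (κ → ι → F)) :=
    {x | IsCombinedStage M W f B (y 0) (p 0) x.1 x.2.1 x.2.2 ∧
      (∀ i, ‖x.2.1 i - y 0‖ ≤ R) ∧ ∀ k i, ‖x.2.2 k i - p 0‖ ≤ R}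
  have mem_S : ∀ᶠ x in comap Prod.fst (𝓝[>] 0) ⊓ 𝓟 S, x ∈ S :=
    mem_inf_of_right (mem_principal_self S)
  have step_tendsto : Tendsto Prod.fst (comap Prod.fst (𝓝[>] 0) ⊓ 𝓟 S) (𝓝 0) :=
    (tendsto_comap.mono_left inf_le_left).mono_right nhdsWithin_le_nhds
  obtain ⟨C, hC, h₀, hh₀, hbound⟩ := exists_forall_norm_le_of_isBigO
    (hM.combined_localError_isBigO hW hf hB hy hp step_tendsto (mem_S.mono fun _ hx => hx.1)
      (mem_S.mono fun _ hx => hx.2.1) (mem_S.mono fun _ hx => hx.2.2))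
  exact ⟨C, hC, h₀, hh₀, fun h hpos hle Y P hYP hY hP =>
    norm_prod_le_iff.1 (hbound (h, Y, P) ⟨hYP, hY, hP⟩ hpos hle)⟩

end CoupledSystem

theorem hasAdditiveThirdOrder_pair {ι : Type*} [Fintype ι] {ta a : Matrix ι ι ℝ}
    {tw w ct c : ι → ℝ} (hct : ∀ i, ct i = ∑ j, ta i j) (hc : ∀ i, c i = ∑ j, a i j)
    (order_one : ∑ i, tw i = 1) (order_one' : ∑ i, w i = 1)
    (order_two : ∀ w' ∈ ({tw, w} : Set (ι → ℝ)), ∀ d ∈ ({ct, c} : Set (ι → ℝ)),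
      ∑ i, w' i * d i = 1 / 2)
    (order_three_bushy : ∀ w' ∈ ({tw, w} : Set (ι → ℝ)), ∀ d ∈ ({ct, c} : Set (ι → ℝ)),
      ∀ e ∈ ({ct, c} : Set (ι → ℝ)), ∑ i, w' i * d i * e i = 1 / 3)
    (order_three_tall : ∀ w' ∈ ({tw, w} : Set (ι → ℝ)), ∀ m ∈ ({ta, a} : Set (Matrix ι ι ℝ)),
      ∀ d ∈ ({ct, c} : Set (ι → ℝ)), ∑ i, ∑ j, w' i * m i j * d j = 1 / 6) :
    HasAdditiveThirdOrder ![ta, a] ![tw, w] := by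
  have weights_mem : ∀ k, ![tw, w] k ∈ ({tw, w} : Set (ι → ℝ)) := by simp
  have tableau_mem : ∀ k, ![ta, a] k ∈ ({ta, a} : Set (Matrix ι ι ℝ)) := by simp
  have abscissae_mem : ∀ k, ![ta, a] k *ᵥ 1 ∈ ({ct, c} : Set (ι → ℝ)) := by
    have hct' : ta *ᵥ 1 = ct := funext fun i => by simp [mulVec, dotProduct_one, hct]
    have hc' : a *ᵥ 1 = c := funext fun i => by simp [mulVec, dotProduct_one, hc]
    simp [hct', hc']
  refine ⟨?_, fun k l => order_two _ (weights_mem k) _ (abscissae_mem l), fun k l m => ?_,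
    fun k l m => ?_⟩
  · simp [dotProduct_one, order_one, order_one']
  · simpa only [dotProduct, Pi.mul_apply, mul_assoc] using
      order_three_bushy _ (weights_mem k) _ (abscissae_mem l) _ (abscissae_mem m)
  · simpa only [dotProduct, mulVec, Finset.mul_sum, mul_assoc] using
      order_three_tall _ (weights_mem k) _ (tableau_mem l) _ (abscissae_mem m)

theorem imex_adjoint_third_order_alt2_general [ProperSpace E] [ProperSpace F] {ι : Type*}
    [Fintype ι] {ta a : Matrix ι ι ℝ} {tw w : ι → ℝ}
    (horder : HasAdditiveThirdOrder ![ta, a] ![tw, w])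
    (htw0 : ∀ i, tw i ≠ 0) (hw0 : ∀ i, w i ≠ 0) {tα α tβ β : Matrix ι ι ℝ}
    (htα : ∀ i j, tα i j = tw j - (tw j / tw i) * ta j i)
    (hα : ∀ i j, α i j = w j - (w j / tw i) * ta j i)
    (htβ : ∀ i j, tβ i j = tw j - (tw j / w i) * a j i)
    (hβ : ∀ i j, β i j = w j - (w j / w i) * a j i)
    {g r : E → E} {A B : E → F →L[ℝ] F} (hg : ContDiff ℝ 3 g) (hr : ContDiff ℝ 3 r)
    (hA : ContDiff ℝ 3 A) (hB : ContDiff ℝ 3 B) {y : ℝ → E} {pt p : ℝ → F}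
    (hy : ∀ t, HasDerivAt y (g (y t) + r (y t)) t)
    (hpt : ∀ t, HasDerivAt pt (-A (y t) (pt t) - B (y t) (p t)) t)
    (hp : ∀ t, HasDerivAt p (-A (y t) (pt t) - B (y t) (p t)) t) (h0eq : pt 0 = p 0) (R : ℝ) :
    ∃ C > (0 : ℝ), ∃ h₀ > (0 : ℝ), ∀ h : ℝ, 0 < h → h ≤ h₀ → ∀ (Y : ι → E) (tP P : ι → F),
      (∀ i, Y i = y 0 + h • ∑ j, ta i j • g (Y j) + h • ∑ j, a i j • r (Y j)) →
      (∀ i, tP i = p 0 - h • ∑ j, tα i j • A (Y j) (tP j) - h • ∑ j, α i j • B (Y j) (P j)) →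
      (∀ i, P i = p 0 - h • ∑ j, tβ i j • A (Y j) (tP j) - h • ∑ j, β i j • B (Y j) (P j)) →
      (∀ i, ‖Y i - y 0‖ ≤ R ∧ ‖tP i - p 0‖ ≤ R ∧ ‖P i - p 0‖ ≤ R) →
      ‖(y 0 + h • ∑ i, tw i • g (Y i) + h • ∑ i, w i • r (Y i)) - y h‖
        + ‖(pt 0 - h • ∑ i, tw i • A (Y i) (tP i) - h • ∑ i, w i • B (Y i) (P i)) - pt h‖
        + ‖(p 0 - h • ∑ i, tw i • A (Y i) (tP i) - h • ∑ i, w i • B (Y i) (P i)) - p h‖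
        ≤ C * h ^ 4 := by
  obtain rfl : pt = p := eq_of_fderiv_eq (fun t => (hpt t).differentiableAt)
    (fun t => (hp t).differentiableAt)
    (fun t => (hpt t).hasFDerivAt.fderiv.trans (hp t).hasFDerivAt.fderiv.symm) 0 h0eq
  obtain ⟨C, hC, h₀, hh₀, hbound⟩ := horder.exists_combined_localError_le
    (Fin.forall_fin_two.2 ⟨htw0, hw0⟩) (f := ![g, r]) (B := ![A, B])
    (Fin.forall_fin_two.2 ⟨hg, hr⟩) (Fin.forall_fin_two.2 ⟨hA, hB⟩) (y := y) (p := pt)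
    (.of_forall fun t => by simpa using hy t)
    (.of_forall fun t => by simpa [sub_eq_neg_add] using hpt t) R
  refine ⟨3 * C, by positivity, h₀, hh₀, fun h hpos hle Y tP P hY htP hP hclose => ?_⟩
  have stages : IsCombinedStage ![ta, a] ![tw, w] ![g, r] ![A, B] (y 0) (pt 0) h Y ![tP, P] := by
    refine ⟨fun i => ?_, Fin.forall_fin_two.2 ⟨fun i => ?_, fun i => ?_⟩⟩
    · simpa [smul_add, add_assoc] using hY i
    · simpa [adjointTableau, smul_add, sub_sub, htα, hα] using htP i
    · simpa [adjointTableau, smul_add, sub_sub, htβ, hβ] using hP i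
  have bound := hbound h hpos hle Y ![tP, P] stages (fun i => (hclose i).1)
    (Fin.forall_fin_two.2 ⟨fun i => (hclose i).2.1, fun i => (hclose i).2.2⟩)
  simp only [Fin.sum_univ_two, Matrix.cons_val_zero, Matrix.cons_val_one, smul_add, ← add_assoc,
    ← sub_sub] at bound
  linarith

theorem sum_filter_smul_of_eq_zero {ι : Type*} [Fintype ι] {c : ι → ℝ} {q : ι → Prop}
    [DecidablePred q] (hc : ∀ j, ¬q j → c j = 0) (v : ι → E) :
    ∑ j ∈ univ.filter q, c j • v j = ∑ j, c j • v j :=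
  Finset.sum_filter_of_ne fun j _ hj => by
    contrapose! hj
    rw [hc j hj, zero_smul]

theorem contDiff_mulVecLin_toContinuousLinearMap {m k : Type*} [Fintype m] [Fintype k]
    {n : WithTop ℕ∞} {N : E → Matrix m k ℝ} (hN : ∀ i j, ContDiff ℝ n fun x => N x i j) :
    ContDiff ℝ n fun x => (N x).mulVecLin.toContinuousLinearMap :=
  contDiff_clm_apply_iff.2 fun _ => contDiff_pi.2 fun i =>
    ContDiff.sum fun j _ => (hN i j).mul contDiff_const

theorem contDiff_jacMat_apply {d : ℕ} {n : WithTop ℕ∞} {g : (Fin d → ℝ) → Fin d → ℝ}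
    (hg : ContDiff ℝ (n + 1) g) (i j : Fin d) : ContDiff ℝ n fun x => jacMat g x i j :=
  contDiff_pi.1 ((hg.fderiv_right le_rfl).clm_apply contDiff_const) i

/-- Theorem 1, third-order part (second alternative): if the IMEX Runge–Kutta
method satisfies the third-order conditions of additive Runge–Kutta methods
together with the extra conditions `Σ_{i,j} ω_i a_{ij} γ_i = Σ_{i,j} ω_i ã_{ij} γ̃_i = 1/6` and one of
`Σ_{i,j} ω_i a_{ij} γ̃_i = 1/6` or `Σ_{i,j} ω_i ã_{ij} γ_i = 1/6`,
then one step of the combined forward–adjoint scheme has a local error of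
order `h⁴`. -/
theorem imex_adjoint_third_order_alt2 (s d : ℕ) (hs : 1 ≤ s) (hd : 1 ≤ d)
    (ta a : Fin s → Fin s → ℝ) (tw w : Fin s → ℝ)
    (hta : ∀ i j : Fin s, i ≤ j → ta i j = 0)
    (ha : ∀ i j : Fin s, i < j → a i j = 0)
    (htw0 : ∀ i, tw i ≠ 0) (hw0 : ∀ i, w i ≠ 0)
    (tα α tβ β : Fin s → Fin s → ℝ)
    (htα : ∀ i j, tα i j = tw j - (tw j / tw i) * ta j i)
    (hα : ∀ i j, α i j = w j - (w j / tw i) * ta j i)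
    (htβ : ∀ i j, tβ i j = tw j - (tw j / w i) * a j i)
    (hβ : ∀ i j, β i j = w j - (w j / w i) * a j i)
    (ε : ℝ) (hε : 0 < ε)
    (D Dbar : Matrix (Fin d) (Fin d) ℝ)
    (g r : (Fin d → ℝ) → (Fin d → ℝ))
    (hg : ContDiff ℝ (⊤ : ℕ∞) g) (hr : ContDiff ℝ (⊤ : ℕ∞) r)
    (hgb : ∀ n : ℕ, ∃ C, ∀ x, ‖iteratedFDeriv ℝ n g x‖ ≤ C)
    (hrb : ∀ n : ℕ, ∃ C, ∀ x, ‖iteratedFDeriv ℝ n r x‖ ≤ C)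
    -- third-order conditions of additive Runge–Kutta methods
    (hord1 : ∑ i, tw i = 1) (hord1' : ∑ i, w i = 1)
    (ct c : Fin s → ℝ)
    (hct : ∀ i, ct i = ∑ j, ta i j) (hc : ∀ i, c i = ∑ j, a i j)
    (hord2 : ∀ w' ∈ ({tw, w} : Set (Fin s → ℝ)), ∀ d' ∈ ({ct, c} : Set (Fin s → ℝ)),
      ∑ i, w' i * d' i = 1 / 2)
    (hord3a : ∀ w' ∈ ({tw, w} : Set (Fin s → ℝ)), ∀ d' ∈ ({ct, c} : Set (Fin s → ℝ)),
      ∀ e' ∈ ({ct, c} : Set (Fin s → ℝ)), ∑ i, w' i * d' i * e' i = 1 / 3)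
    (hord3b : ∀ w' ∈ ({tw, w} : Set (Fin s → ℝ)),
      ∀ m ∈ ({ta, a} : Set (Fin s → Fin s → ℝ)), ∀ d' ∈ ({ct, c} : Set (Fin s → ℝ)),
      ∑ i, ∑ j, w' i * m i j * d' j = 1 / 6)
    -- row sums of the adjoint coefficients
    (gt ga : Fin s → ℝ)
    (hgt : ∀ i, gt i = ∑ j, tα i j) (hga : ∀ i, ga i = ∑ j, α i j)
    (hextra1 : ∑ i, ∑ j, w i * a i j * ga i = 1 / 6)
    (hextra2 : ∑ i, ∑ j, w i * ta i j * gt i = 1 / 6)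
    (hextra3 : (∑ i, ∑ j, w i * a i j * gt i = 1 / 6) ∨
               (∑ i, ∑ j, w i * ta i j * ga i = 1 / 6))
    -- exact solution of the coupled forward–adjoint system
    (y pt p : ℝ → Fin d → ℝ)
    (hy : ∀ t, HasDerivAt y (D *ᵥ g (y t) + ε⁻¹ • r (y t)) t)
    (hpt : ∀ t, HasDerivAt pt
      (-(((jacMat g (y t))ᵀ * Dbar) *ᵥ pt t)
        - ε⁻¹ • ((jacMat r (y t))ᵀ *ᵥ p t)) t)
    (hp : ∀ t, HasDerivAt p
      (-(((jacMat g (y t))ᵀ * Dbar) *ᵥ pt t)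
        - ε⁻¹ • ((jacMat r (y t))ᵀ *ᵥ p t)) t)
    (h0eq : pt 0 = p 0) :
    ∃ C > (0:ℝ), ∃ h₀ > (0:ℝ), ∀ h : ℝ, 0 < h → h ≤ h₀ →
      ∀ Y tP P : Fin s → Fin d → ℝ,
      (∀ i, Y i = y 0
          + h • ∑ j ∈ univ.filter (fun j => j < i), ta i j • (D *ᵥ g (Y j))
          + h • ∑ j ∈ univ.filter (fun j => j ≤ i), a i j • (ε⁻¹ • r (Y j))) →
      (∀ i, tP i = p 0
          - h • ∑ j, tα i j • (((jacMat g (Y j))ᵀ * Dbar) *ᵥ tP j)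
          - h • ∑ j, α i j • (ε⁻¹ • ((jacMat r (Y j))ᵀ *ᵥ P j))) →
      (∀ i, P i = p 0
          - h • ∑ j, tβ i j • (((jacMat g (Y j))ᵀ * Dbar) *ᵥ tP j)
          - h • ∑ j, β i j • (ε⁻¹ • ((jacMat r (Y j))ᵀ *ᵥ P j))) →
      (∀ i, ‖Y i - y 0‖ ≤ 1 ∧ ‖tP i - p 0‖ ≤ 1 ∧ ‖P i - p 0‖ ≤ 1) →
      ‖(y 0 + h • ∑ i, tw i • (D *ᵥ g (Y i))
            + h • ∑ i, w i • (ε⁻¹ • r (Y i))) - y h‖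
      + ‖(pt 0 - h • ∑ i, tw i • (((jacMat g (Y i))ᵀ * Dbar) *ᵥ tP i)
               - h • ∑ i, w i • (ε⁻¹ • ((jacMat r (Y i))ᵀ *ᵥ P i))) - pt h‖
      + ‖(p 0 - h • ∑ i, tw i • (((jacMat g (Y i))ᵀ * Dbar) *ᵥ tP i)
              - h • ∑ i, w i • (ε⁻¹ • ((jacMat r (Y i))ᵀ *ᵥ P i))) - p h‖
      ≤ C * h ^ 4 := by
  have explicit_sum (i : Fin s) (v : Fin s → Fin d → ℝ) :
      ∑ j ∈ univ.filter (fun j => j < i), ta i j • v j = ∑ j, ta i j • v j :=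
    sum_filter_smul_of_eq_zero (fun j hj => hta i j (not_lt.1 hj)) v
  have implicit_sum (i : Fin s) (v : Fin s → Fin d → ℝ) :
      ∑ j ∈ univ.filter (fun j => j ≤ i), a i j • v j = ∑ j, a i j • v j :=
    sum_filter_smul_of_eq_zero (fun j hj => ha i j (not_le.1 hj)) v
  have contDiff_jacMat_g := contDiff_jacMat_apply (n := 3) (contDiff_infty.1 hg 4)
  have contDiff_jacMat_r := contDiff_jacMat_apply (n := 3) (contDiff_infty.1 hr 4)
  simp only [explicit_sum, implicit_sum]
  exact imex_adjoint_third_order_alt2_general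
    (hasAdditiveThirdOrder_pair hct hc hord1 hord1' hord2 hord3a hord3b) htw0 hw0 htα hα htβ hβ
    (A := fun x => ((jacMat g x)ᵀ * Dbar).mulVecLin.toContinuousLinearMap)
    (B := fun x => ε⁻¹ • (jacMat r x)ᵀ.mulVecLin.toContinuousLinearMap)
    (D.mulVecLin.toContinuousLinearMap.contDiff.comp (contDiff_infty.1 hg 3))
    ((contDiff_infty.1 hr 3).const_smul ε⁻¹)
    (contDiff_mulVecLin_toContinuousLinearMap fun i j => by
      simpa only [Matrix.mul_apply, transpose_apply] using
        ContDiff.sum fun k _ => (contDiff_jacMat_g k i).mul contDiff_const)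
    ((contDiff_mulVecLin_toContinuousLinearMap fun i j => contDiff_jacMat_r j i).const_smul ε⁻¹)
    hy hpt hp h0eq 1
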